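/- The fundamental tone of hyperbolic n-space satisfies λ*(ℍⁿ(-1)) = (n-1)²/4. -/

import Mathlib

open MeasureTheory

/-- The height (last coordinate) `x_n` of a point of `ℝⁿ`, used for the upper
half-space model of hyperbolic space. -/
noncomputable def height (n : ℕ) (x : EuclideanSpace ℝ (Fin n)) : ℝ :=
  if h : 0 < n then x ⟨n - 1, by omega⟩ else 0

/-- The upper half-space `{x ∈ ℝⁿ : x_n > 0}`, the underlying set of the
half-space model of hyperbolic `n`-space `ℍⁿ(-1)` with metric `g = x_n⁻² δ`. -/
def upperHalfSpace (n : ℕ) : Set (EuclideanSpace ℝ (Fin n)) :=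
  {x | 0 < height n x}

/-- The fundamental tone `λ*(ℍⁿ(-1))` of hyperbolic `n`-space, computed in the
upper half-space model: the infimum of the Rayleigh quotients
`∫ |∇u|²_g dvol_g / ∫ u² dvol_g` over smooth nonzero compactly supported functions
`u` with support in the half-space, where `|∇u|²_g = x_n² |∇u|²` and
`dvol_g = x_n⁻ⁿ dx`. -/
noncomputable def hyperbolicFundamentalTone (n : ℕ) : ℝ :=
  sInf {r | ∃ u : EuclideanSpace ℝ (Fin n) → ℝ,
    ContDiff ℝ (⊤ : ℕ∞) u ∧ HasCompactSupport u ∧ tsupport u ⊆ upperHalfSpace n ∧ u ≠ 0 ∧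
    r = (∫ x in upperHalfSpace n,
          (height n x) ^ 2 * ‖gradient u x‖ ^ 2 * (height n x) ^ (-(n : ℝ))) /
        (∫ x in upperHalfSpace n, (u x) ^ 2 * (height n x) ^ (-(n : ℝ)))}


section HypTone

/-- smooth compactly supported functions in the half space where the `k`-th coordinate is positive -/
structure IsTest {n : ℕ} (k : Fin n) (w : EuclideanSpace ℝ (Fin n) → ℝ) : Prop where
  smooth : ContDiff ℝ (⊤ : ℕ∞) w
  comp : HasCompactSupport w
  supp : tsupport w ⊆ {x | 0 < x k}

variable {n : ℕ} {k : Fin n} {w : EuclideanSpace ℝ (Fin n) → ℝ}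

lemma grad_sq (w : EuclideanSpace ℝ (Fin n) → ℝ) (x : EuclideanSpace ℝ (Fin n)) :
    ‖gradient w x‖ ^ 2 = ∑ i, (fderiv ℝ w x (EuclideanSpace.single i 1)) ^ 2 := by
  rw [EuclideanSpace.real_norm_sq_eq]
  refine Finset.sum_congr rfl fun i _ => ?_
  rw [← inner_gradient_left (𝕜 := ℝ), EuclideanSpace.inner_single_right]
  simp

lemma IsTest.zero (h : IsTest k w) {x : EuclideanSpace ℝ (Fin n)} (hx : ¬ 0 < x k) : w x = 0 :=
  image_eq_zero_of_notMem_tsupport fun hh => hx (h.supp hh)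

lemma IsTest.fzero (h : IsTest k w) {x : EuclideanSpace ℝ (Fin n)} (hx : ¬ 0 < x k) :
    fderiv ℝ w x = 0 :=
  image_eq_zero_of_notMem_tsupport fun hh => hx (h.supp (tsupport_fderiv_subset ℝ hh))

lemma IsTest.mulpow (h : IsTest k w) (b : ℝ) : IsTest k (fun x => x k ^ b * w x) := by
  have hs : tsupport (fun x => x k ^ b * w x) ⊆ tsupport w :=
    closure_mono fun x hx => by
      simp only [Function.mem_support] at hx ⊢
      exact right_ne_zero_of_mul hx
  refine ⟨?_, ?_, hs.trans h.supp⟩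
  · rw [contDiff_iff_contDiffAt]
    intro x
    by_cases hx : x ∈ tsupport w
    · have hxk : 0 < x k := h.supp hx
      refine ContDiffAt.mul ?_ h.smooth.contDiffAt
      refine ContDiffAt.rpow_const_of_ne ?_ hxk.ne'
      fun_prop
    · have : (fun x => x k ^ b * w x) =ᶠ[nhds x] fun _ => 0 := by
        filter_upwards [(isClosed_tsupport w).isOpen_compl.mem_nhds hx] with y hy
        rw [image_eq_zero_of_notMem_tsupport hy, mul_zero]
      exact contDiffAt_const.congr_of_eventuallyEq this
  · exact h.comp.mono' (subset_closure.trans hs)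

lemma IsTest.cont (h : IsTest k w) : Continuous w := h.smooth.continuous

lemma IsTest.contD (h : IsTest k w) (i : Fin n) :
    Continuous fun x => fderiv ℝ w x (EuclideanSpace.single i 1) :=
  (h.smooth.continuous_fderiv (by simp)).clm_apply continuous_const

lemma IsTest.compD (h : IsTest k w) (i : Fin n) :
    HasCompactSupport fun x => fderiv ℝ w x (EuclideanSpace.single i 1) :=
  h.comp.fderiv_apply ℝ _

lemma IsTest.ibp (h : IsTest k w) (i : Fin n) :
    ∫ x, w x * fderiv ℝ w x (EuclideanSpace.single i 1) = 0 := by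
  have hi : Integrable fun x => w x * fderiv ℝ w x (EuclideanSpace.single i 1) :=
    (h.cont.mul (h.contD i)).integrable_of_hasCompactSupport h.comp.mul_right
  have hd := h.smooth.differentiable (by simp)
  have := integral_mul_fderiv_eq_neg_fderiv_mul_of_integrable (μ := volume) (f := w) (g := w)
    (v := EuclideanSpace.single i 1) (by simpa only [mul_comm] using hi) hi
    ((h.cont.mul h.cont).integrable_of_hasCompactSupport h.comp.mul_right)
    (fun x _ => hd x) (fun x _ => hd x)
  have h2 : ∫ x, fderiv ℝ w x (EuclideanSpace.single i 1) * w x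
    = ∫ x, w x * fderiv ℝ w x (EuclideanSpace.single i 1) := by simp only [mul_comm]
  linarith

lemma IsTest.fderiv_mulpow (h : IsTest k w) (b : ℝ) (i : Fin n) {x : EuclideanSpace ℝ (Fin n)}
    (hx : 0 < x k) :
    fderiv ℝ (fun x => x k ^ b * w x) x (EuclideanSpace.single i 1) =
      x k ^ b * fderiv ℝ w x (EuclideanSpace.single i 1)
        + if i = k then b * x k ^ (b - 1) * w x else 0 := by
  have h1 : HasFDerivAt (fun x : EuclideanSpace ℝ (Fin n) => x k)
      (EuclideanSpace.proj k : EuclideanSpace ℝ (Fin n) →L[ℝ] ℝ) x :=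
    (EuclideanSpace.proj k : EuclideanSpace ℝ (Fin n) →L[ℝ] ℝ).hasFDerivAt
  have h2 := h1.rpow_const (p := b) (Or.inl hx.ne')
  have h3 := (h.smooth.differentiable (by simp) x).hasFDerivAt
  have h4 : HasFDerivAt (fun x : EuclideanSpace ℝ (Fin n) => x k ^ b * w x) _ x := h2.mul h3
  rw [h4.fderiv]
  by_cases hik : i = k
  · subst hik
    simp; ring
  · simp [hik, Ne.symm hik]

lemma IsTest.int1 (h : IsTest k w) : Integrable fun x => (x k)⁻¹ * w x ^ 2 := by
  have h1 := h.mulpow (-1)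
  have : (fun x : EuclideanSpace ℝ (Fin n) => (x k)⁻¹ * w x ^ 2)
      = fun x => (x k ^ (-1:ℝ) * w x) * w x := by
    ext x
    by_cases hx : 0 < x k
    · rw [Real.rpow_neg_one]; ring
    · simp [h.zero hx]
  rw [this]
  exact (h1.cont.mul h.cont).integrable_of_hasCompactSupport h.comp.mul_left

lemma IsTest.int2 (h : IsTest k w) (i : Fin n) :
    Integrable fun x => x k * (fderiv ℝ w x (EuclideanSpace.single i 1)) ^ 2 := by
  have hc := h.contD i
  refine Continuous.integrable_of_hasCompactSupport (by fun_prop) ?_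
  simp only [pow_two]
  exact ((h.compD i).mul_left).mul_left

lemma IsTest.pos (h : IsTest k w) (h0 : w ≠ 0) : 0 < ∫ x, (x k)⁻¹ * w x ^ 2 := by
  obtain ⟨x, hx⟩ := Function.ne_iff.1 h0
  have h1 := h.mulpow (-1)
  have : (fun x : EuclideanSpace ℝ (Fin n) => (x k)⁻¹ * w x ^ 2)
      = fun x => (x k ^ (-1:ℝ) * w x) * w x := by
    ext x
    by_cases hx : 0 < x k
    · rw [Real.rpow_neg_one]; ring
    · simp [h.zero hx]
  have hxk : 0 < x k := by
    by_contra hh; exact hx (h.zero hh)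
  rw [this]
  refine Continuous.integral_pos_of_hasCompactSupport_nonneg_nonzero (x := x)
    (h1.cont.mul h.cont) h.comp.mul_left ?_ ?_
  · intro y
    by_cases hy : 0 < y k
    · have := (Real.rpow_pos_of_pos hy (-1)).le
      have := mul_nonneg this (mul_self_nonneg (w y))
      simpa [mul_assoc] using this
    · simp [h.zero hy]
  · have := (Real.rpow_pos_of_pos hxk (-1)).ne'
    exact mul_ne_zero (mul_ne_zero this hx) hx

/-- ground state identity -/
lemma IsTest.energy (h : IsTest k w) (a : ℝ) (ha : a = ((n : ℝ) - 1) / 2) :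
    ∫ x in {x : EuclideanSpace ℝ (Fin n) | 0 < x k},
      (x k) ^ 2 * ‖gradient (fun x => x k ^ a * w x) x‖ ^ 2 * (x k) ^ (-(n : ℝ)) =
    a ^ 2 * (∫ x, (x k)⁻¹ * w x ^ 2) +
      ∑ i, ∫ x, x k * (fderiv ℝ w x (EuclideanSpace.single i 1)) ^ 2 := by
  have hm : MeasurableSet {x : EuclideanSpace ℝ (Fin n) | 0 < x k} :=
    (isOpen_lt continuous_const (by fun_prop)).measurableSet
  have e1 : ∀ x ∈ {x : EuclideanSpace ℝ (Fin n) | 0 < x k},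
      (x k) ^ 2 * ‖gradient (fun x => x k ^ a * w x) x‖ ^ 2 * (x k) ^ (-(n : ℝ)) =
      a ^ 2 * ((x k)⁻¹ * w x ^ 2) +
      2 * a * (w x * fderiv ℝ w x (EuclideanSpace.single k 1)) +
      ∑ i, x k * (fderiv ℝ w x (EuclideanSpace.single i 1)) ^ 2 := by
    intro x hx
    have hx : 0 < x k := hx
    rw [grad_sq]
    simp_rw [h.fderiv_mulpow a _ hx]
    set y := x k
    have q1 : y ^ 2 * (y ^ a) ^ 2 * y ^ (-(n:ℝ)) = y := by
      rw [← Real.rpow_natCast, ← Real.rpow_natCast, ← Real.rpow_mul hx.le, ← Real.rpow_add hx,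
        ← Real.rpow_add hx]
      conv_rhs => rw [← Real.rpow_one y]
      congr 1; rw [ha]; push_cast; ring
    have q2 : y ^ (a - 1) = y ^ a * y⁻¹ := by
      rw [Real.rpow_sub_one hx.ne', div_eq_mul_inv]
    have q3 : ∀ i, (y ^ a * fderiv ℝ w x (EuclideanSpace.single i 1)
        + if i = k then a * y ^ (a - 1) * w x else 0) ^ 2 =
        (y ^ a) ^ 2 * ((fderiv ℝ w x (EuclideanSpace.single i 1)) ^ 2 +
          if i = k then 2 * a * y⁻¹ * w x * fderiv ℝ w x (EuclideanSpace.single k 1) +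
            a ^ 2 * y⁻¹ ^ 2 * w x ^ 2 else 0) := by
      intro i
      split_ifs with hi
      · subst hi; rw [q2]; ring
      · ring
    simp_rw [q3]
    rw [← Finset.mul_sum, Finset.sum_add_distrib, Finset.sum_ite_eq' , if_pos (Finset.mem_univ _),
      ← Finset.mul_sum]
    generalize (∑ i, (fderiv ℝ w x (EuclideanSpace.single i 1)) ^ 2) = S
    have q4 : ∀ T, y ^ 2 * ((y ^ a) ^ 2 * T) * y ^ (-(n:ℝ)) = y * T := by
      intro T
      calc _ = (y ^ 2 * (y ^ a) ^ 2 * y ^ (-(n:ℝ))) * T := by ring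
        _ = _ := by rw [q1]
    rw [q4]
    field_simp
    ring
  rw [setIntegral_congr_fun hm e1, setIntegral_eq_integral_of_forall_compl_eq_zero]
  · have hi : Integrable fun x => w x * fderiv ℝ w x (EuclideanSpace.single k 1) :=
      (h.cont.mul (h.contD k)).integrable_of_hasCompactSupport h.comp.mul_right
    have hA : Integrable fun x => a ^ 2 * ((x k)⁻¹ * w x ^ 2) +
        2 * a * (w x * fderiv ℝ w x (EuclideanSpace.single k 1)) :=
      (h.int1.const_mul _).add (hi.const_mul _)
    rw [integral_add hA
      (integrable_finsetSum _ fun i _ => h.int2 i),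
      integral_add (h.int1.const_mul _) (hi.const_mul _), integral_const_mul, integral_const_mul,
      h.ibp, integral_finsetSum _ fun i _ => h.int2 i]
    ring
  · intro x hx
    simp [h.zero hx, h.fzero hx]

lemma IsTest.mass (h : IsTest k w) (a : ℝ) (ha : a = ((n : ℝ) - 1) / 2) :
    ∫ x in {x : EuclideanSpace ℝ (Fin n) | 0 < x k},
      (x k ^ a * w x) ^ 2 * (x k) ^ (-(n : ℝ)) = ∫ x, (x k)⁻¹ * w x ^ 2 := by
  have hm : MeasurableSet {x : EuclideanSpace ℝ (Fin n) | 0 < x k} :=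
    (isOpen_lt continuous_const (by fun_prop)).measurableSet
  have e1 : ∀ x ∈ {x : EuclideanSpace ℝ (Fin n) | 0 < x k},
      (x k ^ a * w x) ^ 2 * (x k) ^ (-(n : ℝ)) = (x k)⁻¹ * w x ^ 2 := by
    intro x hx
    have hx : 0 < x k := hx
    set y := x k
    have q1 : (y ^ a) ^ 2 * y ^ (-(n:ℝ)) = y⁻¹ := by
      rw [← Real.rpow_natCast, ← Real.rpow_mul hx.le, ← Real.rpow_add hx, ← Real.rpow_neg_one]
      congr 1; rw [ha]; push_cast; ring
    rw [← q1]; ring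
  rw [setIntegral_congr_fun hm e1, setIntegral_eq_integral_of_forall_compl_eq_zero]
  intro x hx
  simp [h.zero hx]

end HypTone

section OneD

lemma oneD_chi (ε : ℝ) (hε : 0 < ε) : ∃ χ : ℝ → ℝ, ContDiff ℝ (⊤ : ℕ∞) χ ∧ HasCompactSupport χ ∧
    0 < ∫ t, χ t ^ 2 ∧ (∫ t, deriv χ t ^ 2) / (∫ t, χ t ^ 2) ≤ ε := by
  let G : ContDiffBump (0 : ℝ) := ⟨1, 2, by norm_num, by norm_num⟩
  have hG : ContDiff ℝ (⊤ : ℕ∞) G := G.contDiff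
  set A := ∫ t, deriv G t ^ 2
  set B := ∫ t, G t ^ 2
  have hA : 0 ≤ A := integral_nonneg fun t => sq_nonneg _
  have hB : 0 < B := by
    refine Continuous.integral_pos_of_hasCompactSupport_nonneg_nonzero (x := 0)
      (by have := hG.continuous; fun_prop) ?_ (fun t => sq_nonneg _) ?_
    · simp only [pow_two]; exact G.hasCompactSupport.mul_left
    · have : G 0 = 1 := G.one_of_mem_closedBall (by simp [G])
      simp [this]
  obtain ⟨R, hR1, hR⟩ : ∃ R : ℝ, 1 ≤ R ∧ A / B / ε ≤ R :=
    ⟨max 1 (A / B / ε), le_max_left _ _, le_max_right _ _⟩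
  have hR0 : 0 < R := by linarith
  have hd : ∀ t, deriv (fun t => G (t / R)) t = R⁻¹ * deriv G (t / R) := by
    intro t
    have h1 : HasDerivAt G (deriv G (t / R)) (t / R) :=
      (hG.differentiable (by simp) _).hasDerivAt
    have h2 : HasDerivAt (fun t : ℝ => t / R) (1 / R) t := (hasDerivAt_id t).div_const R
    have h3 : HasDerivAt (fun t => G (t / R)) _ t :=
      HasDerivAt.comp (h₂ := G) (h := fun t : ℝ => t / R) t h1 h2
    rw [h3.deriv]; ring
  have i1 : ∫ t, G (t / R) ^ 2 = R * B := by
    have := Measure.integral_comp_div (fun t => G t ^ 2) R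
    rw [this, abs_of_pos hR0]; rfl
  have i2 : ∫ t, deriv (fun t => G (t / R)) t ^ 2 = R⁻¹ * A := by
    simp_rw [hd, mul_pow]
    have := Measure.integral_comp_div (fun t => deriv G t ^ 2) R
    rw [integral_const_mul, this, abs_of_pos hR0, smul_eq_mul]
    field_simp
    rfl
  refine ⟨fun t => G (t / R), hG.comp (by fun_prop), ?_, ?_, ?_⟩
  · have := G.hasCompactSupport.comp_homeomorph (Homeomorph.mulRight₀ R⁻¹ (inv_ne_zero hR0.ne'))
    convert this using 1
    ext t; simp [div_eq_mul_inv]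
  · rw [i1]; positivity
  · rw [i1, i2]
    have : R⁻¹ * A / (R * B) = (A / B) / R / R := by field_simp
    rw [this, div_le_iff₀ hR0, div_le_iff₀ hR0]
    rw [div_le_iff₀ hε] at hR
    nlinarith [mul_le_mul_of_nonneg_left hR1 (mul_pos hR0 hε).le]

lemma oneD_F (ε : ℝ) (hε : 0 < ε) : ∃ F : ℝ → ℝ, ContDiff ℝ (⊤ : ℕ∞) F ∧ HasCompactSupport F ∧
    tsupport F ⊆ Set.Ioi 0 ∧
    0 < ∫ t, t⁻¹ * F t ^ 2 ∧ (∫ t, t * deriv F t ^ 2) / (∫ t, t⁻¹ * F t ^ 2) ≤ ε := by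
  let G : ContDiffBump (3 : ℝ) := ⟨1, 2, by norm_num, by norm_num⟩
  have hG : ContDiff ℝ (⊤ : ℕ∞) G := G.contDiff
  have hz1 : ∀ t, t ≤ 1 → G t = 0 := by
    intro t ht
    refine G.zero_of_le_dist ?_
    rw [Real.dist_eq, abs_of_nonpos (by linarith)]; simp only [G]; linarith
  have hz2 : ∀ t, 5 ≤ t → G t = 0 := by
    intro t ht
    refine G.zero_of_le_dist ?_
    rw [Real.dist_eq, abs_of_nonneg (by linarith)]; simp only [G]; linarith
  set A := ∫ t in Set.Ioi (0:ℝ), t * deriv G t ^ 2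
  set B := ∫ t in Set.Ioi (0:ℝ), t⁻¹ * G t ^ 2 with hBdef
  have hA : 0 ≤ A := setIntegral_nonneg measurableSet_Ioi fun t ht => by
    have : (0:ℝ) < t := ht
    positivity
  have hB : 0 < B := by
    have e : ∀ t, t⁻¹ * G t ^ 2 = (max t 1)⁻¹ * G t ^ 2 := by
      intro t
      rcases le_total t 1 with h | h
      · simp [hz1 t h]
      · rw [max_eq_left h]
    rw [hBdef, setIntegral_eq_integral_of_forall_compl_eq_zero]
    · simp_rw [e]
      have hc := hG.continuous
      refine Continuous.integral_pos_of_hasCompactSupport_nonneg_nonzero (x := 3) ?_ ?_ ?_ ?_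
      · refine Continuous.mul (Continuous.inv₀ (by fun_prop) fun t => ?_) (by fun_prop)
        have : 1 ≤ max t 1 := le_max_right _ _
        linarith
      · simp only [pow_two]; exact G.hasCompactSupport.mul_left.mul_left
      · intro t
        have : 1 ≤ max t 1 := le_max_right _ _
        simp only [Pi.zero_apply]
        positivity
      · have : G 3 = 1 := G.one_of_mem_closedBall (by simp [G])
        simp [this]
    · intro t ht
      have : t ≤ 1 := by
        have : ¬ (0 < t) := ht
        linarith
      simp [hz1 t this]
  obtain ⟨p, hp, hp1, hpε⟩ : ∃ p : ℝ, 0 < p ∧ p ≤ 1 ∧ A / B * p ≤ ε := by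
    have hAB : 0 ≤ A / B := by positivity
    refine ⟨min 1 (ε / (A / B + 1)), by positivity, min_le_left _ _, ?_⟩
    calc A / B * min 1 (ε / (A / B + 1)) ≤ A / B * (ε / (A / B + 1)) := by
          gcongr; exact min_le_right _ _
      _ ≤ ε := by
          rw [mul_div_assoc', div_le_iff₀ (by positivity)]
          nlinarith
  let F : ℝ → ℝ := fun t => if 0 < t then G (t ^ p) else 0
  have hFz : ∀ t, t ≤ 1 → F t = 0 := by
    intro t ht
    simp only [F]
    split_ifs with h
    · exact hz1 _ (Real.rpow_le_one h.le ht hp.le)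
    · rfl
  have hFeq : ∀ t, 0 < t → F =ᶠ[nhds t] fun t => G (t ^ p) := by
    intro t ht
    filter_upwards [Ioi_mem_nhds ht] with s hs
    simp only [F]; rw [if_pos (show 0 < s from hs)]
  have hsupp : Function.support F ⊆ Set.Icc 1 (5 ^ p⁻¹) := by
    intro t ht
    simp only [Function.mem_support] at ht
    have h1 : 1 < t := by
      by_contra h; exact ht (hFz t (not_lt.1 h))
    refine ⟨h1.le, ?_⟩
    by_contra h
    push Not at h
    apply ht
    simp only [F]
    rw [if_pos (by linarith)]
    apply hz2
    calc (5:ℝ) = (5 ^ p⁻¹) ^ p := by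
          rw [← Real.rpow_mul (by norm_num), inv_mul_cancel₀ hp.ne', Real.rpow_one]
      _ ≤ t ^ p := Real.rpow_le_rpow (by positivity) h.le hp.le
  have htsupp : tsupport F ⊆ Set.Icc 1 (5 ^ p⁻¹) := closure_minimal hsupp isClosed_Icc
  have hd : ∀ t, 0 < t → deriv F t = deriv G (t ^ p) * (p * t ^ (p - 1)) := by
    intro t ht
    rw [(hFeq t ht).deriv_eq]
    have h1 : HasDerivAt G (deriv G (t ^ p)) (t ^ p) :=
      (hG.differentiable (by simp) _).hasDerivAt
    have h2 := Real.hasDerivAt_rpow_const (x := t) (p := p) (Or.inl ht.ne')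
    have h3 : HasDerivAt (fun t => G (t ^ p)) _ t :=
      HasDerivAt.comp (h₂ := G) (h := fun t : ℝ => t ^ p) t h1 h2
    exact h3.deriv
  have hd0 : ∀ t, ¬ 0 < t → deriv F t = 0 := by
    intro t ht
    apply image_eq_zero_of_notMem_tsupport
    intro h
    have := (htsupp (tsupport_deriv_subset h)).1
    linarith
  have i1 : ∫ t, t⁻¹ * F t ^ 2 = p⁻¹ * B := by
    rw [← setIntegral_eq_integral_of_forall_compl_eq_zero (s := Set.Ioi 0)]
    · rw [hBdef, ← integral_comp_rpow_Ioi_of_pos (g := fun t => t⁻¹ * G t ^ 2) hp, ← integral_const_mul]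
      refine setIntegral_congr_fun measurableSet_Ioi fun t ht => ?_
      have ht : 0 < t := ht
      simp only [F, smul_eq_mul]
      rw [if_pos ht, Real.rpow_sub_one ht.ne']
      have := Real.rpow_pos_of_pos ht p
      field_simp
    · intro t ht
      have : ¬ (0 < t) := ht
      rw [hFz t (by linarith)]; simp
  have i2 : ∫ t, t * deriv F t ^ 2 = p * A := by
    rw [← setIntegral_eq_integral_of_forall_compl_eq_zero (s := Set.Ioi 0)]
    · simp only [A]
      rw [← integral_comp_rpow_Ioi_of_pos (g := fun t => t * deriv G t ^ 2) hp, ← integral_const_mul]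
      refine setIntegral_congr_fun measurableSet_Ioi fun t ht => ?_
      have ht : 0 < t := ht
      simp only [smul_eq_mul]
      rw [hd t ht, Real.rpow_sub_one ht.ne']
      have := Real.rpow_pos_of_pos ht p
      field_simp
    · intro t ht
      rw [hd0 t ht]; simp
  refine ⟨F, ?_, ?_, ?_, ?_, ?_⟩
  · rw [contDiff_iff_contDiffAt]
    intro t
    by_cases ht : 0 < t
    · refine ContDiffAt.congr_of_eventuallyEq ?_ (hFeq t ht)
      exact hG.contDiffAt.comp t (Real.contDiffAt_rpow_const_of_ne ht.ne')
    · have : F =ᶠ[nhds t] fun _ => 0 := by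
        filter_upwards [Iio_mem_nhds (show t < 1 by linarith)] with s hs
        exact hFz s (le_of_lt hs)
      exact contDiffAt_const.congr_of_eventuallyEq this
  · exact HasCompactSupport.of_support_subset_isCompact isCompact_Icc hsupp
  · intro t ht
    have := (htsupp ht).1
    exact lt_of_lt_of_le one_pos this
  · rw [i1]; positivity
  · rw [i1, i2]
    have : p * A / (p⁻¹ * B) = (A / B * p) * p := by field_simp
    rw [this]
    nlinarith

end OneD

section Prod

variable {n : ℕ}

lemma integral_prod_coord (f : Fin n → ℝ → ℝ) :
    ∫ x : EuclideanSpace ℝ (Fin n), ∏ j, f j (x j) = ∏ j, ∫ t, f j t := by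
  rw [← integral_fintype_prod_volume_eq_prod f]
  exact (PiLp.volume_preserving_ofLp (Fin n)).integral_comp
    (MeasurableEquiv.toLp 2 (Fin n → ℝ)).symm.measurableEmbedding (fun x => ∏ j, f j (x j))

lemma prod_fderiv (g : Fin n → ℝ → ℝ) (hg : ∀ j, Differentiable ℝ (g j)) (i : Fin n)
    (x : EuclideanSpace ℝ (Fin n)) :
    fderiv ℝ (fun x : EuclideanSpace ℝ (Fin n) => ∏ j, g j (x j)) x (EuclideanSpace.single i 1) =
      ∏ j, (if j = i then deriv (g j) else g j) (x j) := by
  have h1 : ∀ j ∈ Finset.univ, HasFDerivAt (fun x : EuclideanSpace ℝ (Fin n) => g j (x j))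
      (deriv (g j) (x j) • (EuclideanSpace.proj j : EuclideanSpace ℝ (Fin n) →L[ℝ] ℝ)) x := by
    intro j _
    exact HasDerivAt.comp_hasFDerivAt (f := fun x : EuclideanSpace ℝ (Fin n) => x j) x
      (hg j (x j)).hasDerivAt
      (EuclideanSpace.proj j : EuclideanSpace ℝ (Fin n) →L[ℝ] ℝ).hasFDerivAt
  have h2 : HasFDerivAt (fun x : EuclideanSpace ℝ (Fin n) => ∏ j, g j (x j)) _ x :=
    HasFDerivAt.finsetProd h1
  rw [h2.fderiv]
  rw [_root_.sum_apply, Finset.sum_eq_single i]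
  · rw [← Finset.mul_prod_erase Finset.univ _ (Finset.mem_univ i)]
    simp only [if_true]
    have h3 : ∏ j ∈ Finset.univ.erase i, (if j = i then deriv (g j) else g j) (x j) =
        ∏ j ∈ Finset.univ.erase i, g j (x j) := by
      refine Finset.prod_congr rfl fun j hj => ?_
      rw [if_neg (Finset.ne_of_mem_erase hj)]
    rw [h3]
    simp [mul_comm]
  · intro j _ hj
    simp [hj]
  · simp

lemma isTest_prod (k : Fin n) (g : Fin n → ℝ → ℝ) (hg : ∀ j, ContDiff ℝ (⊤ : ℕ∞) (g j))
    (hc : ∀ j, HasCompactSupport (g j)) (hk : tsupport (g k) ⊆ Set.Ioi 0) :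
    IsTest k (fun x : EuclideanSpace ℝ (Fin n) => ∏ j, g j (x j)) := by
  have hK : IsCompact {x : EuclideanSpace ℝ (Fin n) | ∀ j, x j ∈ tsupport (g j)} := by
    have h1 : IsCompact (Set.pi Set.univ fun j => tsupport (g j)) :=
      isCompact_univ_pi fun j => hc j
    have h2 := h1.image (PiLp.continuous_toLp 2 (fun _ : Fin n => ℝ))
    convert h2 using 1
    ext x
    simp only [Set.mem_ofPred_eq, Set.mem_image, Set.mem_pi, Set.mem_univ, true_imp_iff]
    constructor
    · intro h; exact ⟨x.ofLp, h, rfl⟩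
    · rintro ⟨y, hy, rfl⟩; exact hy
  have hs : Function.support (fun x : EuclideanSpace ℝ (Fin n) => ∏ j, g j (x j)) ⊆
      {x : EuclideanSpace ℝ (Fin n) | ∀ j, x j ∈ tsupport (g j)} := by
    intro x hx j
    apply subset_tsupport
    rw [Function.mem_support] at hx ⊢
    exact fun h => hx (Finset.prod_eq_zero (Finset.mem_univ j) h)
  refine ⟨?_, HasCompactSupport.of_support_subset_isCompact hK hs, ?_⟩
  · refine contDiff_prod fun j _ => ?_
    exact (hg j).comp (by fun_prop)
  · intro x hx
    exact hk (closure_minimal hs hK.isClosed hx k)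

lemma exists_test (k : Fin n) (ε : ℝ) (hε : 0 < ε) : ∃ w : EuclideanSpace ℝ (Fin n) → ℝ,
    IsTest k w ∧ w ≠ 0 ∧
    (∑ i, ∫ x, x k * (fderiv ℝ w x (EuclideanSpace.single i 1)) ^ 2) /
      (∫ x, (x k)⁻¹ * w x ^ 2) ≤ ε := by
  obtain ⟨F, hF, hFc, hFs, hFp, hFe⟩ := oneD_F (ε / 2) (by positivity)
  set β := (∫ t, t * F t ^ 2) / (∫ t, t⁻¹ * F t ^ 2) with hβ
  have hβ0 : 0 ≤ β := by
    refine div_nonneg (integral_nonneg fun t => ?_) hFp.le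
    by_cases ht : t ∈ tsupport F
    · have : 0 < t := hFs ht
      simp only [Pi.zero_apply]; positivity
    · simp [image_eq_zero_of_notMem_tsupport ht]
  obtain ⟨χ, hχ, hχc, hχp, hχe⟩ := oneD_chi (ε / 2 / (n * β + 1)) (by positivity)
  let g : Fin n → ℝ → ℝ := fun j => if j = k then F else χ
  have hg : ∀ j, ContDiff ℝ (⊤ : ℕ∞) (g j) := by
    intro j; simp only [g]; split_ifs <;> assumption
  have hc : ∀ j, HasCompactSupport (g j) := by
    intro j; simp only [g]; split_ifs <;> assumption
  have hT := isTest_prod k g hg hc (by simpa [g] using hFs)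
  let D : Fin n → ℝ := fun j => ∫ t, (if j = k then t⁻¹ else 1) * g j t ^ 2
  let N : Fin n → Fin n → ℝ := fun i j => ∫ t, (if j = k then t else 1) *
    ((if j = i then deriv (g j) else g j) t) ^ 2
  have hD : ∀ j, 0 < D j := by
    intro j
    by_cases h : j = k
    · simpa [D, g, h] using hFp
    · simpa [D, g, h] using hχp
  have eD : ∫ x : EuclideanSpace ℝ (Fin n), (x k)⁻¹ * (∏ j, g j (x j)) ^ 2 = ∏ j, D j := by
    rw [← integral_prod_coord (fun j t => (if j = k then t⁻¹ else 1) * g j t ^ 2)]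
    congr 1; ext x
    rw [Finset.prod_mul_distrib, Finset.prod_pow, Finset.prod_ite_eq' ]
    simp
  have eN : ∀ i, ∫ x : EuclideanSpace ℝ (Fin n), x k *
      (fderiv ℝ (fun x : EuclideanSpace ℝ (Fin n) => ∏ j, g j (x j)) x
        (EuclideanSpace.single i 1)) ^ 2 = ∏ j, N i j := by
    intro i
    rw [← integral_prod_coord (fun j t => (if j = k then t else 1) *
      ((if j = i then deriv (g j) else g j) t) ^ 2)]
    congr 1; ext x
    rw [prod_fderiv g (fun j => (hg j).differentiable (by simp)), Finset.prod_mul_distrib,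
      Finset.prod_pow, Finset.prod_ite_eq']
    simp
  have r1 : ∀ i j, j ≠ i → j ≠ k → N i j / D j = 1 := by
    intro i j h1 h2
    have : N i j = D j := by simp [N, D, h1, h2]
    rw [this, div_self (hD j).ne']
  have t1 : (∏ j, N k j) / ∏ j, D j ≤ ε / 2 := by
    rw [← Finset.prod_div_distrib, Finset.prod_eq_single k (fun j _ h => r1 k j h h) (by simp)]
    simpa [N, D, g] using hFe
  have t2 : ∀ i, i ≠ k → (∏ j, N i j) / ∏ j, D j ≤ β * (ε / 2 / (n * β + 1)) := by
    intro i hi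
    rw [← Finset.prod_div_distrib, Finset.prod_eq_mul k i hi.symm
      (fun j _ h => r1 i j h.2 h.1) (by simp) (by simp)]
    have a1 : N i k / D k = β := by simp [N, D, g, hβ, hi.symm]
    have a2 : N i i / D i = (∫ t, deriv χ t ^ 2) / (∫ t, χ t ^ 2) := by simp [N, D, g, hi]
    rw [a1, a2]
    gcongr
  refine ⟨_, hT, ?_, ?_⟩
  · intro h0
    have : ∏ j, D j = 0 := by
      rw [← eD]
      have : ∀ x : EuclideanSpace ℝ (Fin n), ∏ j, g j (x j) = 0 := fun x => congrFun h0 x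
      simp [this]
    exact (Finset.prod_pos fun j _ => hD j).ne' this
  · rw [eD]
    simp_rw [eN]
    rw [Finset.sum_div, ← Finset.add_sum_erase _ _ (Finset.mem_univ k)]
    have hn : 0 < n := k.pos
    have t3 : ∑ i ∈ Finset.univ.erase k, (∏ j, N i j) / ∏ j, D j ≤
        n * (β * (ε / 2 / (n * β + 1))) := by
      calc _ ≤ ∑ i ∈ Finset.univ.erase k, β * (ε / 2 / (n * β + 1)) :=
            Finset.sum_le_sum fun i hi => t2 i (Finset.ne_of_mem_erase hi)
        _ ≤ ∑ i : Fin n, β * (ε / 2 / (n * β + 1)) :=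
            Finset.sum_le_sum_of_subset_of_nonneg (Finset.erase_subset _ _)
              fun _ _ _ => by positivity
        _ = _ := by simp
    have t4 : n * (β * (ε / 2 / (n * β + 1))) ≤ ε / 2 := by
      rw [← mul_assoc, mul_div_assoc', div_le_iff₀ (by positivity)]
      nlinarith
    linarith

end Prod

/-- The fundamental tone of hyperbolic `n`-space satisfies
`λ*(ℍⁿ(-1)) = (n-1)²/4`. -/
theorem hyperbolic_fundamental_tone (n : ℕ) (hn : 1 ≤ n) :
    hyperbolicFundamentalTone n = ((n : ℝ) - 1) ^ 2 / 4 := by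
  obtain ⟨k, hk⟩ : ∃ k : Fin n, ∀ x, height n x = x k :=
    ⟨⟨n - 1, by omega⟩, fun x => by simp only [height]; rw [dif_pos (by omega)]⟩
  have hU : upperHalfSpace n = {x | 0 < x k} := by
    simp only [upperHalfSpace, hk]
  obtain ⟨a, ha⟩ : ∃ a : ℝ, a = ((n : ℝ) - 1) / 2 := ⟨_, rfl⟩
  have haa : ((n : ℝ) - 1) ^ 2 / 4 = a ^ 2 := by rw [ha]; ring
  rw [haa, hyperbolicFundamentalTone]
  simp only [hk, hU]
  have hval : ∀ w : EuclideanSpace ℝ (Fin n) → ℝ, IsTest k w → w ≠ 0 →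
      (∫ x in {x : EuclideanSpace ℝ (Fin n) | 0 < x k},
        (x k) ^ 2 * ‖gradient (fun x => x k ^ a * w x) x‖ ^ 2 * (x k) ^ (-(n : ℝ))) /
      (∫ x in {x : EuclideanSpace ℝ (Fin n) | 0 < x k},
        (x k ^ a * w x) ^ 2 * (x k) ^ (-(n : ℝ))) =
      a ^ 2 + (∑ i, ∫ x, x k * (fderiv ℝ w x (EuclideanSpace.single i 1)) ^ 2) /
      (∫ x, (x k)⁻¹ * w x ^ 2) := by
    intro w h h0
    rw [h.energy a ha, h.mass a ha, add_div, mul_div_assoc, div_self (h.pos h0).ne', mul_one]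
  have hlow : ∀ r ∈ {r | ∃ u : EuclideanSpace ℝ (Fin n) → ℝ,
      ContDiff ℝ (⊤ : ℕ∞) u ∧ HasCompactSupport u ∧
      tsupport u ⊆ {x : EuclideanSpace ℝ (Fin n) | 0 < x k} ∧ u ≠ 0 ∧
      r = (∫ x in {x : EuclideanSpace ℝ (Fin n) | 0 < x k},
            (x k) ^ 2 * ‖gradient u x‖ ^ 2 * (x k) ^ (-(n : ℝ))) /
          (∫ x in {x : EuclideanSpace ℝ (Fin n) | 0 < x k}, (u x) ^ 2 * (x k) ^ (-(n : ℝ)))},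
      a ^ 2 ≤ r := by
    rintro r ⟨u, h1, h2, h3, h4, rfl⟩
    have hu : IsTest k u := ⟨h1, h2, h3⟩
    have hw := hu.mulpow (-a)
    have e : u = fun x => x k ^ a * (x k ^ (-a) * u x) := by
      ext x
      by_cases hx : 0 < x k
      · rw [← mul_assoc, ← Real.rpow_add hx]; simp
      · simp [hu.zero hx]
    have hw0 : (fun x : EuclideanSpace ℝ (Fin n) => x k ^ (-a) * u x) ≠ 0 := by
      intro h
      apply h4
      rw [e]; ext x
      have := congrFun h x
      simp only [Pi.zero_apply] at this ⊢
      rw [this, mul_zero]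
    have := hval _ hw hw0
    rw [← e] at this
    have e' : ∀ x, x k ^ a * (x k ^ (-a) * u x) = u x := fun x => (congrFun e x).symm
    simp only [e'] at this
    rw [this]
    have hs : 0 ≤ ∑ i, ∫ x : EuclideanSpace ℝ (Fin n), x k *
        (fderiv ℝ (fun x => x k ^ (-a) * u x) x (EuclideanSpace.single i 1)) ^ 2 := by
      refine Finset.sum_nonneg fun i _ => integral_nonneg fun x => ?_
      by_cases hx : 0 < x k
      · simp only [Pi.zero_apply]; positivity
      · simp [hw.fzero hx]
    have := div_nonneg hs (hw.pos hw0).le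
    linarith
  have hex : ∀ ε : ℝ, 0 < ε → ∃ r ∈ {r | ∃ u : EuclideanSpace ℝ (Fin n) → ℝ,
      ContDiff ℝ (⊤ : ℕ∞) u ∧ HasCompactSupport u ∧
      tsupport u ⊆ {x : EuclideanSpace ℝ (Fin n) | 0 < x k} ∧ u ≠ 0 ∧
      r = (∫ x in {x : EuclideanSpace ℝ (Fin n) | 0 < x k},
            (x k) ^ 2 * ‖gradient u x‖ ^ 2 * (x k) ^ (-(n : ℝ))) /
          (∫ x in {x : EuclideanSpace ℝ (Fin n) | 0 < x k}, (u x) ^ 2 * (x k) ^ (-(n : ℝ)))},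
      r ≤ a ^ 2 + ε := by
    intro ε hε
    obtain ⟨w, hw, hw0, hwe⟩ := exists_test k ε hε
    have hu := hw.mulpow a
    refine ⟨_, ⟨fun x => x k ^ a * w x, hu.smooth, hu.comp, hu.supp, ?_, rfl⟩, ?_⟩
    · intro h
      apply hw0
      ext x
      by_cases hx : 0 < x k
      · have := congrFun h x
        simp only [Pi.zero_apply] at this ⊢
        exact (mul_eq_zero.1 this).resolve_left (Real.rpow_pos_of_pos hx a).ne'
      · simp [hw.zero hx]
    · rw [hval w hw hw0]
      linarith
  apply le_antisymm
  · refine le_of_forall_pos_le_add fun ε hε => ?_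
    obtain ⟨r, hr, hle⟩ := hex ε hε
    exact (csInf_le ⟨a ^ 2, hlow⟩ hr).trans hle
  · obtain ⟨r, hr, -⟩ := hex 1 one_pos
    exact le_csInf ⟨r, hr⟩ hlow
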